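/- Between any pair of non-crossing spanning trees of n points in convex position there exists a flip sequence of length at most 2n − √n + 1 (in particular, 2n − Ω(√n)). -/

import Mathlib

open Finset

/-- An edge (chord) on `n` points in convex position, as an unordered pair of indices. -/
abbrev Edge (n : ℕ) := Sym2 (Fin n)

/-- The cyclic successor of a point. -/
def next {n : ℕ} (i : Fin n) : Fin n := ⟨((i : ℕ) + 1) % n, Nat.mod_lt _ i.pos⟩


/-- Chords `{a,b}` (with `a<b`) and `{c,d}` (with `c<d`) cross iff
`a<c<b<d` or `c<a<d<b`. -/
def Cross {n : ℕ} (e f : Edge n) : Prop :=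
  ∃ a b c d : Fin n, e = s(a, b) ∧ f = s(c, d) ∧ a < b ∧ c < d ∧
    ((a < c ∧ c < b ∧ b < d) ∨ (c < a ∧ a < d ∧ d < b))

/-- A set of chords is non-crossing if no two of its chords cross. -/
def NonCrossing {n : ℕ} (E : Finset (Edge n)) : Prop :=
  ∀ e ∈ E, ∀ f ∈ E, ¬ Cross e f

/-- A border edge joins two cyclically consecutive points (this includes `{n-1, 0}`,
i.e. `{v_n, v_1}`, since addition in `Fin n` wraps around). -/
def IsBorder {n : ℕ} (e : Edge n) : Prop := ∃ i : Fin n, e = s(i, next i)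

/-- A spanning tree on the `n` points, given by its edge set: loopless, connected,
with `n - 1` edges. -/
def IsSpanningTree {n : ℕ} (T : Finset (Edge n)) : Prop :=
  (SimpleGraph.fromEdgeSet (T : Set (Edge n))).Connected ∧
    T.card = n - 1 ∧ ∀ e ∈ T, ¬ e.IsDiag

/-- A non-crossing spanning tree. -/
def NCST {n : ℕ} (T : Finset (Edge n)) : Prop := IsSpanningTree T ∧ NonCrossing T

/-- A flip removes one edge and adds another so that the result is again a
non-crossing spanning tree. -/
def Flip {n : ℕ} (T T' : Finset (Edge n)) : Prop :=
  NCST T ∧ NCST T' ∧ ∃ e ∈ T, ∃ f, f ∉ T ∧ T' = insert f (T.erase e)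

/-- A flip sequence of length `k` from `T₁` to `T₂`. -/
def FlipSeq {n : ℕ} (T₁ T₂ : Finset (Edge n)) (k : ℕ) : Prop :=
  ∃ f : ℕ → Finset (Edge n), f 0 = T₁ ∧ f k = T₂ ∧ ∀ i < k, Flip (f i) (f (i + 1))

/-- There is a flip sequence from `T₁` to `T₂` of length at most `m`. -/
def FlipDistLE {n : ℕ} (T₁ T₂ : Finset (Edge n)) (m : ℕ) : Prop :=
  ∃ k ≤ m, FlipSeq T₁ T₂ k

/-!
The `m` gaps between consecutive points carry the argument. Assigning to each gap the lowest edge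
above it turns a non-crossing spanning tree into a family of pairwise compatible chords, one per
gap, and reassigning a single gap is a flip. A border edge is compatible with everything, so moving
every gap to its border edge and from there to its final edge takes at most `2 * m` flips. This
bound can be improved in two ways: a gap that starts or ends with its border edge ("short") saves a
flip, and so does every gap in a set whose gaps can be moved directly to their final edges in some
order.

In each tree, at most as many gaps share no endpoint with their edge ("wide") as are short. The gaps
that are neither short nor wide in either tree fall into four classes: the first edge is below the
second one, or above it, or they extend in opposite directions, in one of two ways. Each class can
be moved directly, ordered by edge length in the first two cases and by position in the last two.
Counting yields a saving of at least `m / 4` flips, which is enough since `√n ≤ n / 4 + 1`.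
-/

/-- A chord with its endpoints in increasing order. Its endpoints lie among the `m + 1` points
`0, …, m`, so that there are `m` gaps: the gap `g : Fin m` lies between the points `g` and
`g + 1`. -/
@[ext]
structure Chord (m : ℕ) where
  left : Fin (m + 1)
  right : Fin (m + 1)
  left_lt_right : left < right

namespace Chord

variable {m : ℕ}

instance : DecidableEq (Chord m) := fun p q =>
  decidable_of_iff (p.left = q.left ∧ p.right = q.right) Chord.ext_iff.symm

/-- The chord as an unordered edge. -/
def edge (p : Chord m) : Edge (m + 1) := s(p.left, p.right)

/-- The number of gaps below a chord. -/
def length (p : Chord m) : ℕ := p.right - p.left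

/-- The chord `p` passes over the gap `g`. -/
def Covers (p : Chord m) (g : Fin m) : Prop := (p.left : ℕ) ≤ g ∧ (g : ℕ) < p.right

/-- The chord `p` lies (weakly) below the chord `q`. -/
def Below (p q : Chord m) : Prop := q.left ≤ p.left ∧ p.right ≤ q.right

/-- The border edge spanning a single gap. -/
def border (g : Fin m) : Chord m := ⟨g.castSucc, g.succ, Fin.castSucc_lt_succ⟩

/-- Chords `p` and `q`, assigned to the gaps `g` and `h` respectively, may occur together in a gap
representation: they do not cross, and if one is below the other, then the lower one does not
cover the gap of the upper one. -/
def Compatible (g : Fin m) (p : Chord m) (h : Fin m) (q : Chord m) : Prop :=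
  p.right ≤ q.left ∨ q.right ≤ p.left ∨ (p.Below q ∧ ¬ p.Covers h) ∨ (q.Below p ∧ ¬ q.Covers g)

instance (p q : Chord m) : Decidable (p.Below q) := inferInstanceAs (Decidable (_ ∧ _))

theorem edge_injective : Function.Injective (edge : Chord m → Edge (m + 1)) := by
  intro p q hpq
  rcases Sym2.eq_iff.1 hpq with ⟨hl, hr⟩ | ⟨hl, hr⟩
  · exact Chord.ext hl hr
  · exact absurd (hl ▸ hr ▸ p.left_lt_right) q.left_lt_right.asymm

theorem cross_edge_iff {p q : Chord m} :
    Cross p.edge q.edge ↔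
      (p.left < q.left ∧ q.left < p.right ∧ p.right < q.right) ∨
        (q.left < p.left ∧ p.left < q.right ∧ q.right < p.right) := by
  constructor
  · rintro ⟨a, b, c, d, hp, hq, hab, hcd, h⟩
    obtain rfl : p = ⟨a, b, hab⟩ := edge_injective hp
    obtain rfl : q = ⟨c, d, hcd⟩ := edge_injective hq
    exact h
  · exact fun h => ⟨_, _, _, _, rfl, rfl, p.left_lt_right, q.left_lt_right, h⟩

theorem compatible_border_left {g h : Fin m} (hgh : g ≠ h) (q : Chord m) :
    Compatible g (border g) h q := by
  simp only [Compatible, Below, Covers, border, Fin.le_def, Fin.val_castSucc, Fin.val_succ]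
  omega

theorem Compatible.symm {g h : Fin m} {p q : Chord m} (hpq : Compatible g p h q) :
    Compatible h q g p := by
  unfold Compatible at *
  tauto

theorem compatible_border_right {g h : Fin m} (hgh : g ≠ h) (p : Chord m) :
    Compatible g p h (border h) :=
  (compatible_border_left hgh.symm p).symm

theorem Compatible.not_cross {g h : Fin m} {p q : Chord m} (hpq : Compatible g p h q) :
    ¬ Cross p.edge q.edge := by
  rw [cross_edge_iff]
  simp only [Compatible, Below, Covers] at hpq
  omega

theorem Compatible.length_lt {g h : Fin m} {p q : Chord m} (hpq : Compatible g p h q)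
    (hg : p.Covers g) (hh : q.Covers h) (hph : p.Covers h) : q.length < p.length := by
  simp only [Compatible, Below, Covers, length] at *
  omega

theorem Compatible.of_below {g h : Fin m} {p q q' : Chord m} (hpq : Compatible g p h q)
    (hq' : q'.Covers h) (hbelow : q'.Below q) (hlen : q.length ≤ p.length) :
    Compatible g p h q' := by
  simp only [Compatible, Below, Covers, length] at *
  omega

end Chord

open Chord

/-- A gap representation assigns to every gap a chord covering it, in a pairwise compatible way.
Non-crossing spanning trees correspond to gap representations, each gap being assigned the lowest
edge of the tree above it. -/
structure IsGapRep {m : ℕ} (x : Fin m → Chord m) : Prop where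
  covers : ∀ g, (x g).Covers g
  compatible : Pairwise fun g h => Compatible g (x g) h (x h)

/-- The edge set of a gap representation. -/
def treeOf {m : ℕ} (x : Fin m → Chord m) : Finset (Edge (m + 1)) :=
  univ.image fun g => (x g).edge

/-! ### The tree of a gap representation -/

theorem reachable_of_forall_gap {m : ℕ} (G : SimpleGraph (Fin (m + 1))) {a b : Fin (m + 1)}
    (hab : a ≤ b)
    (hG : ∀ g : Fin m, a ≤ g.castSucc → g.succ ≤ b → G.Reachable g.castSucc g.succ) :
    G.Reachable a b := by
  induction b using Fin.induction with
  | zero => rw [Fin.le_zero_iff.1 hab]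
  | succ i ih =>
    rcases hab.eq_or_lt with rfl | hlt
    · rfl
    have hai : a ≤ i.castSucc := Fin.le_castSucc_iff.2 hlt
    exact (ih hai fun g hag hgi => hG g hag (hgi.trans Fin.castSucc_lt_succ.le)).trans
      (hG i hai le_rfl)

namespace IsGapRep

variable {m : ℕ} {x : Fin m → Chord m}

theorem injective (hx : IsGapRep x) : Function.Injective x := by
  intro g h hgh
  by_contra hne
  have hlt := (hx.compatible hne).length_lt (hx.covers g) (hx.covers h) (hgh ▸ hx.covers h)
  exact hlt.ne (congrArg length hgh.symm)

theorem edge_injective (hx : IsGapRep x) : Function.Injective fun g => (x g).edge :=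
  Chord.edge_injective.comp hx.injective

theorem reachable_gap (hx : IsGapRep x) (g : Fin m) :
    (SimpleGraph.fromEdgeSet (treeOf x : Set (Edge (m + 1)))).Reachable g.castSucc g.succ := by
  induction hk : (x g).length using Nat.strong_induction_on generalizing g with
  | _ k ih =>
    obtain ⟨hleft, hright⟩ := hx.covers g
    have hshorter : ∀ h, h ≠ g → (x g).Covers h → (x h).length < k := fun h hne hcov =>
      hk ▸ (hx.compatible hne.symm).length_lt (hx.covers g) (hx.covers h) hcov
    have hchord : (SimpleGraph.fromEdgeSet (treeOf x : Set (Edge (m + 1)))).Adj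
        (x g).left (x g).right := by
      rw [SimpleGraph.fromEdgeSet_adj]
      exact ⟨mem_coe.2 (mem_image_of_mem _ (mem_univ g)), (x g).left_lt_right.ne⟩
    refine .trans (.symm ?_) (hchord.reachable.trans (.symm ?_))
    · refine reachable_of_forall_gap _ (Fin.le_def.2 hleft) fun h hl hr => ?_
      rw [Fin.le_def, Fin.val_castSucc] at hl
      rw [Fin.le_def, Fin.val_succ, Fin.val_castSucc] at hr
      exact ih _ (hshorter h (by omega) ⟨hl, by omega⟩) h rfl
    · refine reachable_of_forall_gap _ (Fin.le_def.2 hright) fun h hl hr => ?_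
      rw [Fin.le_def, Fin.val_succ, Fin.val_castSucc] at hl
      rw [Fin.le_def, Fin.val_succ] at hr
      exact ih _ (hshorter h (by omega) ⟨by omega, hr⟩) h rfl

theorem card_treeOf (hx : IsGapRep x) : #(treeOf x) = m := by
  rw [treeOf, card_image_of_injective _ hx.edge_injective, card_univ, Fintype.card_fin]

theorem ncst_treeOf (hx : IsGapRep x) : NCST (treeOf x) := by
  refine ⟨⟨⟨fun u v => ?_⟩, hx.card_treeOf, ?_⟩, ?_⟩
  · have hzero := fun w =>
      reachable_of_forall_gap _ (Fin.zero_le w) fun g _ _ => hx.reachable_gap g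
    exact (hzero u).symm.trans (hzero v)
  · simp only [treeOf, mem_image, mem_univ, true_and, forall_exists_index,
      forall_apply_eq_imp_iff]
    exact fun g => Sym2.mk_isDiag_iff.not.2 (x g).left_lt_right.ne
  · simp only [NonCrossing, treeOf, mem_image, mem_univ, true_and, forall_exists_index,
      forall_apply_eq_imp_iff]
    intro g h
    rcases eq_or_ne g h with rfl | hgh
    · rw [cross_edge_iff]
      omega
    · exact (hx.compatible hgh).not_cross

end IsGapRep

/-! ### Existence of gap representations -/

theorem IsSpanningTree.exists_edge_leaving {n : ℕ} {T : Finset (Edge n)} (hT : IsSpanningTree T)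
    (S : Set (Fin n)) {u v : Fin n} (hu : u ∈ S) (hv : v ∉ S) :
    ∃ a ∈ S, ∃ b ∉ S, s(a, b) ∈ T := by
  obtain ⟨w⟩ := hT.1.preconnected u v
  obtain ⟨d, -, ha, hb⟩ := w.exists_boundary_dart S hu hv
  exact ⟨_, ha, _, hb, ((SimpleGraph.fromEdgeSet_adj _).1 d.adj).1⟩

/-- `p` is the lowest edge of `T` above the gap `g`. -/
def IsLowestAbove {m : ℕ} (T : Finset (Edge (m + 1))) (g : Fin m) (p : Chord m) : Prop :=
  p.edge ∈ T ∧ p.Covers g ∧ ∀ q : Chord m, q.edge ∈ T → q.Covers g → p.Below q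

section Existence

variable {m : ℕ} {T : Finset (Edge (m + 1))}

theorem IsSpanningTree.exists_covers (hT : IsSpanningTree T) (g : Fin m) :
    ∃ p : Chord m, p.edge ∈ T ∧ p.Covers g := by
  obtain ⟨a, ha, b, hb, hab⟩ := hT.exists_edge_leaving {v | v ≤ g.castSucc} (u := 0)
    (v := Fin.last m) (Fin.zero_le _) (not_le.2 (Fin.castSucc_lt_last g))
  have hb' : g.castSucc < b := not_le.1 hb
  exact ⟨⟨a, b, lt_of_le_of_lt ha hb'⟩, hab, ha, hb'⟩

theorem NonCrossing.below_of_length_le (hT : NonCrossing T) {g : Fin m} {p q : Chord m}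
    (hp : p.edge ∈ T) (hq : q.edge ∈ T) (hpg : p.Covers g) (hqg : q.Covers g)
    (hpq : p.length ≤ q.length) : p.Below q := by
  have hcross := cross_edge_iff.not.1 (hT _ hp _ hq)
  simp only [Below, Covers, length] at *
  omega

theorem NCST.exists_isLowestAbove (hT : NCST T) (g : Fin m) : ∃ p, IsLowestAbove T g p := by
  obtain ⟨p, ⟨hp, hpg⟩, hmin⟩ := WellFounded.has_min (measure (length (m := m))).wf
    {p | p.edge ∈ T ∧ p.Covers g} (hT.1.exists_covers g)
  exact ⟨p, hp, hpg, fun q hq hqg =>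
    hT.2.below_of_length_le hp hq hpg hqg (not_lt.1 (hmin q ⟨hq, hqg⟩))⟩

/-- If `p` is lowest above both `g < h`, then no edge of the tree leaves the points `g + 1, …, h`:
such an edge would cover `g` or `h` without being above `p`. -/
theorem IsLowestAbove.gap_le (hT : IsSpanningTree T) {g h : Fin m} {p : Chord m}
    (hg : IsLowestAbove T g p) (hh : IsLowestAbove T h p) : h ≤ g := by
  by_contra! hgh
  obtain ⟨-, hpg, hlowg⟩ := hg
  obtain ⟨-, hph, hlowh⟩ := hh
  obtain ⟨a, ⟨hga, hah⟩, b, hb, hab⟩ := hT.exists_edge_leaving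
    {v | g.castSucc < v ∧ v ≤ h.castSucc} (u := h.castSucc) (v := 0) ⟨hgh, le_rfl⟩
    (fun h0 => (Fin.zero_le _).not_gt h0.1)
  rcases le_or_gt b g.castSucc with hbg | hgb
  · have := hlowg ⟨b, a, hbg.trans_lt hga⟩ (by rwa [edge, Sym2.eq_swap]) ⟨hbg, hga⟩
    exact (hph.2.trans_le this.2).not_ge hah
  · have hhb : h.castSucc < b := not_le.1 fun hbh => hb ⟨hgb, hbh⟩
    have := hlowh ⟨a, b, hah.trans_lt hhb⟩ hab ⟨hah, hhb⟩
    exact (hga.trans_le this.1).not_ge hpg.1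

theorem IsLowestAbove.compatible (hT : NCST T) {g h : Fin m} (hgh : g ≠ h) {p q : Chord m}
    (hp : IsLowestAbove T g p) (hq : IsLowestAbove T h q) : Compatible g p h q := by
  have hne : p ≠ q := by
    rintro rfl
    exact hgh (le_antisymm (hq.gap_le hT.1 hp) (hp.gap_le hT.1 hq))
  have hne' : ¬ (p.left = q.left ∧ p.right = q.right) := Chord.ext_iff.not.1 hne
  have hcross := cross_edge_iff.not.1 (hT.2 _ hp.1 _ hq.1)
  have hpq := hp.2.2 q hq.1
  have hqp := hq.2.2 p hp.1
  simp only [Compatible, Below, Covers] at *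
  omega

theorem NCST.exists_isGapRep (hT : NCST T) : ∃ x : Fin m → Chord m, IsGapRep x ∧ treeOf x = T := by
  choose x hlow using hT.exists_isLowestAbove
  have hx : IsGapRep x :=
    ⟨fun g => (hlow g).2.1, fun g h hgh => (hlow g).compatible hT hgh (hlow h)⟩
  refine ⟨x, hx, eq_of_subset_of_card_le (image_subset_iff.2 fun g _ => (hlow g).1) ?_⟩
  rw [hx.card_treeOf, hT.1.2.1, Nat.add_sub_cancel]

end Existence

/-! ### Flip sequences along gap representations -/

theorem FlipDistLE.refl {n : ℕ} (T : Finset (Edge n)) (k : ℕ) : FlipDistLE T T k :=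
  ⟨0, k.zero_le, fun _ => T, rfl, rfl, fun i hi => absurd hi i.not_lt_zero⟩

theorem FlipDistLE.mono {n k l : ℕ} {T₁ T₂ : Finset (Edge n)} (h : FlipDistLE T₁ T₂ k)
    (hkl : k ≤ l) : FlipDistLE T₁ T₂ l :=
  let ⟨j, hj, hseq⟩ := h
  ⟨j, hj.trans hkl, hseq⟩

theorem Flip.flipSeq_succ {n k : ℕ} {T₁ T₂ T₃ : Finset (Edge n)} (h₁ : Flip T₁ T₂)
    (h₂ : FlipSeq T₂ T₃ k) : FlipSeq T₁ T₃ (k + 1) := by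
  obtain ⟨f, rfl, rfl, hf⟩ := h₂
  refine ⟨fun i => i.casesOn T₁ f, rfl, rfl, ?_⟩
  rintro (_ | i) hi
  · exact h₁
  · exact hf i (Nat.lt_of_succ_lt_succ hi)

theorem Flip.flipDistLE_succ {n k : ℕ} {T₁ T₂ T₃ : Finset (Edge n)} (h₁ : Flip T₁ T₂)
    (h₂ : FlipDistLE T₂ T₃ k) : FlipDistLE T₁ T₃ (k + 1) :=
  let ⟨j, hj, hseq⟩ := h₂
  ⟨j + 1, Nat.succ_le_succ hj, h₁.flipSeq_succ hseq⟩

theorem FlipSeq.trans {n k l : ℕ} {T₁ T₂ T₃ : Finset (Edge n)} (h₁ : FlipSeq T₁ T₂ k)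
    (h₂ : FlipSeq T₂ T₃ l) : FlipSeq T₁ T₃ (k + l) := by
  induction k generalizing T₁ with
  | zero =>
    obtain ⟨f, rfl, rfl, -⟩ := h₁
    rwa [Nat.zero_add]
  | succ k ih =>
    obtain ⟨f, rfl, rfl, hf⟩ := h₁
    rw [Nat.add_right_comm]
    exact (hf 0 k.succ_pos).flipSeq_succ
      (ih ⟨fun i => f (i + 1), rfl, rfl, fun i hi => hf (i + 1) (Nat.succ_lt_succ hi)⟩)

theorem FlipDistLE.trans {n k l : ℕ} {T₁ T₂ T₃ : Finset (Edge n)} (h₁ : FlipDistLE T₁ T₂ k)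
    (h₂ : FlipDistLE T₂ T₃ l) : FlipDistLE T₁ T₃ (k + l) :=
  let ⟨i, hi, hseq₁⟩ := h₁
  let ⟨j, hj, hseq₂⟩ := h₂
  ⟨i + j, Nat.add_le_add hi hj, hseq₁.trans hseq₂⟩

/-- The gaps in `Y` can be reassigned from their `x`-chords to their `y`-chords one at a time, in
order of increasing rank: the new chord of a gap is compatible with the old chords of all gaps that
are reassigned later. In other words, the conflicts between the `y`-chords and the `x`-chords of `Y`
form an acyclic digraph. -/
def HasSwapOrder {m : ℕ} (x y : Fin m → Chord m) (Y : Finset (Fin m)) : Prop :=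
  ∃ r : Fin m → ℤ, ∀ g ∈ Y, ∀ h ∈ Y, g ≠ h → r g ≤ r h → Compatible g (y g) h (x h)

/-- The assignment `x` on `Y`, and border edges on all other gaps. -/
def collapse {m : ℕ} (Y : Finset (Fin m)) (x : Fin m → Chord m) : Fin m → Chord m :=
  Y.piecewise x border

/-- The gaps to which a border edge is assigned. -/
def short {m : ℕ} (x : Fin m → Chord m) : Finset (Fin m) := {g | x g = border g}

section Flips

variable {m : ℕ} {x y : Fin m → Chord m}

theorem IsGapRep.update (hx : IsGapRep x) {g : Fin m} {p : Chord m} (hpg : p.Covers g)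
    (hp : ∀ h ≠ g, Compatible g p h (x h)) : IsGapRep (Function.update x g p) := by
  constructor
  · intro h
    rcases eq_or_ne h g with rfl | hne
    · rwa [Function.update_self]
    · rw [Function.update_of_ne hne]
      exact hx.covers h
  · intro h k hhk
    rcases eq_or_ne h g with rfl | hh
    · rw [Function.update_self, Function.update_of_ne hhk.symm]
      exact hp k hhk.symm
    rw [Function.update_of_ne hh]
    rcases eq_or_ne k g with rfl | hk
    · rw [Function.update_self]
      exact (hp h hh).symm
    · rw [Function.update_of_ne hk]
      exact hx.compatible hhk

theorem IsGapRep.treeOf_update (hx : IsGapRep x) (g : Fin m) (p : Chord m) :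
    treeOf (Function.update x g p) = insert p.edge ((treeOf x).erase (x g).edge) := by
  unfold treeOf
  rw [← image_erase hx.edge_injective, ← insert_erase (mem_univ g), image_insert,
    Function.update_self, erase_insert_eq_erase, erase_idem]
  congr 1
  exact image_congr fun h hh => by simp only [Function.update_of_ne (ne_of_mem_erase hh)]

theorem IsGapRep.flip_update (hx : IsGapRep x) {g : Fin m} {p : Chord m}
    (hxp : IsGapRep (Function.update x g p)) (hne : x g ≠ p) :
    Flip (treeOf x) (treeOf (Function.update x g p)) := by
  refine ⟨hx.ncst_treeOf, hxp.ncst_treeOf, (x g).edge, mem_image_of_mem _ (mem_univ g), p.edge,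
    fun hmem => ?_, hx.treeOf_update g p⟩
  obtain ⟨h, -, hh⟩ := mem_image.1 hmem
  have hxh : x h = p := Chord.edge_injective hh
  have hhg : h ≠ g := by
    rintro rfl
    exact hne hxh
  refine hhg (hxp.injective ?_)
  rw [Function.update_self, Function.update_of_ne hhg, hxh]

theorem HasSwapOrder.flipDistLE (hx : IsGapRep x) (hy : IsGapRep y)
    (hxy : HasSwapOrder x y univ) : FlipDistLE (treeOf x) (treeOf y) #{g | x g ≠ y g} := by
  obtain ⟨r, hr⟩ := hxy
  induction hk : #{g | x g ≠ y g} generalizing x with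
  | zero =>
    have hxy : x = y := by
      ext1 g
      simpa using filter_eq_empty_iff.1 (card_eq_zero.1 hk) (mem_univ g)
    exact hxy ▸ .refl _ _
  | succ k ih =>
    obtain ⟨g, hg, hmin⟩ := exists_min_image {g | x g ≠ y g} r (card_pos.1 (by omega))
    have hx' : IsGapRep (Function.update x g (y g)) := by
      refine hx.update (hy.covers g) fun h hne => ?_
      by_cases hxh : x h = y h
      · exact hxh ▸ hy.compatible hne.symm
      · exact hr g (mem_univ g) h (mem_univ h) hne.symm (hmin h (by simpa using hxh))
    refine (hx.flip_update hx' (mem_filter.1 hg).2).flipDistLE_succ (ih hx' ?_ ?_)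
    · intro a _ b _ hab hrab
      rcases eq_or_ne b g with rfl | hbg
      · rw [Function.update_self]
        exact hy.compatible hab
      · rw [Function.update_of_ne hbg]
        exact hr a (mem_univ a) b (mem_univ b) hab hrab
    · have herase : ({h | Function.update x g (y g) h ≠ y h} : Finset (Fin m)) =
          ({h | x h ≠ y h} : Finset (Fin m)).erase g := by
        ext h
        rcases eq_or_ne h g with rfl | hne <;> simp [*]
      rw [herase, card_erase_of_mem hg, hk, Nat.add_sub_cancel]

theorem compatible_collapse {Y Z : Finset (Fin m)} {g h : Fin m} (hgh : g ≠ h)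
    (hxy : g ∈ Y → h ∈ Z → Compatible g (x g) h (y h)) :
    Compatible g (collapse Y x g) h (collapse Z y h) := by
  by_cases hg : g ∈ Y
  · by_cases hh : h ∈ Z
    · simpa only [collapse, piecewise_eq_of_mem, hg, hh] using hxy hg hh
    · simpa only [collapse, piecewise_eq_of_notMem _ _ _ hh] using compatible_border_right hgh _
  · simpa only [collapse, piecewise_eq_of_notMem _ _ _ hg] using compatible_border_left hgh _

theorem IsGapRep.isGapRep_collapse (hx : IsGapRep x) (Y : Finset (Fin m)) :
    IsGapRep (collapse Y x) := by
  refine ⟨fun g => ?_, fun g h hgh => compatible_collapse hgh fun _ _ => hx.compatible hgh⟩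
  by_cases hg : g ∈ Y
  · simpa only [collapse, piecewise_eq_of_mem _ _ _ hg] using hx.covers g
  · simpa only [collapse, piecewise_eq_of_notMem _ _ _ hg] using
      ⟨le_rfl, Nat.lt_succ_self g⟩

theorem card_compl_union_short {Y : Finset (Fin m)} (hY : Disjoint Y (short x)) :
    #(Y ∪ short x)ᶜ + #Y + #(short x) = m := by
  rw [add_assoc, ← card_union_of_disjoint hY, card_compl_add_card, Fintype.card_fin]

theorem card_collapse_ne_le (Y : Finset (Fin m)) (x : Fin m → Chord m) :
    #{g | collapse Y x g ≠ x g} ≤ #(Y ∪ short x)ᶜ := by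
  refine card_le_card fun g hg => mem_compl.2 fun hmem => (mem_filter.1 hg).2 ?_
  by_cases hgY : g ∈ Y
  · exact piecewise_eq_of_mem _ _ _ hgY
  · have hshort := (mem_filter.1 ((mem_union.1 hmem).resolve_left hgY)).2
    exact (piecewise_eq_of_notMem _ _ _ hgY).trans hshort.symm

theorem IsGapRep.hasSwapOrder_collapse (hx : IsGapRep x) (Y : Finset (Fin m)) :
    HasSwapOrder x (collapse Y x) univ := by
  refine ⟨0, fun g _ h _ hgh _ => ?_⟩
  simpa only [collapse, piecewise_univ] using
    compatible_collapse (Y := Y) (Z := univ) hgh fun _ _ => hx.compatible hgh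

theorem HasSwapOrder.symm {Y : Finset (Fin m)} (hxy : HasSwapOrder x y Y) :
    HasSwapOrder y x Y := by
  obtain ⟨r, hr⟩ := hxy
  exact ⟨-r, fun g hg h hh hgh hle => (hr h hh g hg hgh.symm (neg_le_neg_iff.1 hle)).symm⟩

theorem HasSwapOrder.hasSwapOrder_collapse {Y : Finset (Fin m)} (hxy : HasSwapOrder x y Y) :
    HasSwapOrder (collapse Y x) (collapse Y y) univ := by
  obtain ⟨r, hr⟩ := hxy
  exact ⟨r, fun g _ h _ hgh hle =>
    compatible_collapse hgh fun hg hh => hr g hg h hh hgh hle⟩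

theorem IsGapRep.flipDistLE_collapse (hx : IsGapRep x) (Y : Finset (Fin m)) :
    FlipDistLE (treeOf x) (treeOf (collapse Y x)) #(Y ∪ short x)ᶜ := by
  refine ((hx.hasSwapOrder_collapse Y).flipDistLE hx (hx.isGapRep_collapse Y)).mono ?_
  simpa only [ne_comm] using card_collapse_ne_le Y x

theorem IsGapRep.collapse_flipDistLE (hx : IsGapRep x) (Y : Finset (Fin m)) :
    FlipDistLE (treeOf (collapse Y x)) (treeOf x) #(Y ∪ short x)ᶜ :=
  ((hx.hasSwapOrder_collapse Y).symm.flipDistLE (hx.isGapRep_collapse Y) hx).mono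
    (card_collapse_ne_le Y x)

theorem HasSwapOrder.flipDistLE_collapse (hx : IsGapRep x) (hy : IsGapRep y)
    {Y : Finset (Fin m)} (hxy : HasSwapOrder x y Y) :
    FlipDistLE (treeOf (collapse Y x)) (treeOf (collapse Y y)) #Y := by
  refine (hxy.hasSwapOrder_collapse.flipDistLE (hx.isGapRep_collapse Y)
    (hy.isGapRep_collapse Y)).mono (card_le_card fun g hg => ?_)
  by_contra hgY
  refine (mem_filter.1 hg).2 ?_
  simp only [collapse, piecewise_eq_of_notMem _ _ _ hgY]

/-- Flip to border edges outside `Y`, swap the gaps of `Y` directly, and flip back. Compared with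
flipping every gap twice, each gap of `Y` and each short gap of either tree saves one flip. -/
theorem HasSwapOrder.flipDistLE_two_mul_sub (hx : IsGapRep x) (hy : IsGapRep y)
    {Y : Finset (Fin m)} (hxy : HasSwapOrder x y Y) (hYx : Disjoint Y (short x))
    (hYy : Disjoint Y (short y)) :
    FlipDistLE (treeOf x) (treeOf y) (2 * m - (#Y + #(short x) + #(short y))) := by
  have hcx := card_compl_union_short hYx
  have hcy := card_compl_union_short hYy
  exact (((hx.flipDistLE_collapse Y).trans (hxy.flipDistLE_collapse hx hy)).trans
    (hy.collapse_flipDistLE Y)).mono (by omega)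

end Flips

/-! ### Large swappable sets of gaps -/

/-- The gaps sharing no endpoint with the chord assigned to them. -/
def wide {m : ℕ} (x : Fin m → Chord m) : Finset (Fin m) :=
  {g | ((x g).left : ℕ) < g ∧ (g : ℕ) + 1 < (x g).right}

/-- The gaps sharing exactly one endpoint with the chord assigned to them. -/
def near {m : ℕ} (x : Fin m → Chord m) : Finset (Fin m) :=
  {g | ¬ (((x g).left : ℕ) = g ↔ ((x g).right : ℕ) = g + 1)}

section Swappable

variable {m : ℕ} {x y : Fin m → Chord m}

theorem mem_short {g : Fin m} :
    g ∈ short x ↔ ((x g).left : ℕ) = g ∧ ((x g).right : ℕ) = g + 1 := by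
  simp only [short, border, mem_filter, mem_univ, true_and, Chord.ext_iff, Fin.ext_iff,
    Fin.val_castSucc, Fin.val_succ]

/-- If the chord of `g` extends to the left of `g`, then the chord of `g - 1` cannot extend to the
right of `g - 1`: the two chords would cross, or the lower would cover the gap of the upper. -/
theorem IsGapRep.card_extending_left_le (hx : IsGapRep x) :
    #{g | ((x g).left : ℕ) < g} ≤ #{g | ((x g).right : ℕ) = g + 1} := by
  refine card_le_card_of_injOn (fun g => ⟨g - 1, by omega⟩) ?_ ?_
  · intro g hg
    simp only [mem_coe, mem_filter, mem_univ, true_and] at hg ⊢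
    have hcompat := @hx.compatible g ⟨g - 1, by omega⟩ (by rw [Ne, Fin.ext_iff]; simp only; omega)
    have hg₀ := hx.covers g
    have hg₁ := hx.covers ⟨g - 1, by omega⟩
    simp only [Compatible, Below, Covers] at hcompat hg₀ hg₁
    omega
  · intro g hg h hh hgh
    simp only [mem_coe, mem_filter, mem_univ, true_and, Fin.mk.injEq] at hg hh hgh
    omega

theorem IsGapRep.card_wide_le_card_short (hx : IsGapRep x) : #(wide x) ≤ #(short x) := by
  set L : Finset (Fin m) := {g | ((x g).left : ℕ) < g} with hL
  set R : Finset (Fin m) := {g | ((x g).right : ℕ) = g + 1} with hR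
  have hwide : wide x = L \ R := by
    ext g
    have := hx.covers g
    simp only [wide, hL, hR, Covers, mem_sdiff, mem_filter, mem_univ, true_and] at *
    omega
  have hshort : short x = R \ L := by
    ext g
    have := hx.covers g
    simp only [mem_short, hL, hR, Covers, mem_sdiff, mem_filter, mem_univ, true_and] at *
    omega
  rw [hwide, hshort]
  exact card_sdiff_le_card_sdiff_iff.2 hx.card_extending_left_le

theorem IsGapRep.card_compl_near_le (hx : IsGapRep x) : #(near x)ᶜ ≤ 2 * #(short x) := by
  have hsub : (near x)ᶜ ⊆ short x ∪ wide x := by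
    intro g hg
    have := hx.covers g
    simp only [near, wide, mem_short, Covers, mem_compl, mem_union, mem_filter, mem_univ,
      true_and] at *
    omega
  have hle := (card_le_card hsub).trans (card_union_le _ _)
  have hwide := hx.card_wide_le_card_short
  omega

theorem IsGapRep.le_card_near_inter (hx : IsGapRep x) (hy : IsGapRep y) :
    m ≤ #(near x ∩ near y) + 2 * #(short x) + 2 * #(short y) := by
  have hcard := card_add_card_compl (near x ∩ near y)
  rw [compl_inter, Fintype.card_fin] at hcard
  have hunion := card_union_le (near x)ᶜ (near y)ᶜ
  have hcx := hx.card_compl_near_le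
  have hcy := hy.card_compl_near_le
  omega

theorem disjoint_near_short (x : Fin m → Chord m) : Disjoint (near x) (short x) := by
  refine disjoint_left.2 fun g hg hs => ?_
  rw [mem_short] at hs
  exact (mem_filter.1 hg).2 (iff_of_true hs.1 hs.2)

theorem hasSwapOrder_of_below (hx : IsGapRep x) (hy : IsGapRep y) {Y : Finset (Fin m)}
    (hY : ∀ g ∈ Y, (x g).Below (y g)) : HasSwapOrder x y Y :=
  ⟨fun g => -(y g).length, fun _ _ h hh hgh hle => (hy.compatible hgh).of_below (hx.covers h)
    (hY h hh) (Nat.cast_le.1 (neg_le_neg_iff.1 hle))⟩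

theorem hasSwapOrder_of_right_left {Y : Finset (Fin m)}
    (hY : ∀ g ∈ Y, ((x g).left : ℕ) = g ∧ ((y g).right : ℕ) = g + 1) : HasSwapOrder x y Y := by
  refine ⟨fun g => g, fun g hg h hh hgh hle => Or.inl ?_⟩
  have hlt : g < h := lt_of_le_of_ne (Nat.cast_le.1 hle) hgh
  have hgY := hY g hg
  have hhY := hY h hh
  rw [Fin.le_def]
  omega

theorem IsGapRep.exists_hasSwapOrder (hx : IsGapRep x) (hy : IsGapRep y) :
    ∃ Y ⊆ near x ∩ near y, HasSwapOrder x y Y ∧ #(near x ∩ near y) ≤ 4 * #Y := by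
  set N := near x ∩ near y with hN
  set A := {g ∈ N | (x g).Below (y g)} with hA
  set B := {g ∈ N | (y g).Below (x g)} with hB
  set C := {g ∈ N | ((x g).left : ℕ) = g ∧ ((y g).right : ℕ) = g + 1} with hC
  set D := {g ∈ N | ((y g).left : ℕ) = g ∧ ((x g).right : ℕ) = g + 1} with hD
  have hcover : N ⊆ (A ∪ B) ∪ (C ∪ D) := by
    intro g hg
    simp only [hA, hB, hC, hD, hN, near, Below, mem_union, mem_inter, mem_filter, mem_univ,
      true_and] at *
    omega
  have hcard := card_le_card hcover
  have hABCD := card_union_le (A ∪ B) (C ∪ D)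
  have hAB := card_union_le A B
  have hCD := card_union_le C D
  by_contra! hlt
  have hAlt := hlt A (filter_subset _ _)
    (hasSwapOrder_of_below hx hy fun g hg => (mem_filter.1 hg).2)
  have hBlt := hlt B (filter_subset _ _)
    (hasSwapOrder_of_below hy hx fun g hg => (mem_filter.1 hg).2).symm
  have hClt := hlt C (filter_subset _ _)
    (hasSwapOrder_of_right_left fun g hg => (mem_filter.1 hg).2)
  have hDlt := hlt D (filter_subset _ _)
    (hasSwapOrder_of_right_left fun g hg => (mem_filter.1 hg).2).symm
  omega

end Swappable

theorem NCST.flipDistLE_seven_mul_div_four {n : ℕ} {T₁ T₂ : Finset (Edge n)} (h₁ : NCST T₁)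
    (h₂ : NCST T₂) : FlipDistLE T₁ T₂ (7 * (n - 1) / 4) := by
  obtain _ | m := n
  · exact h₁.1.1.nonempty.some.elim0
  obtain ⟨x, hx, rfl⟩ := h₁.exists_isGapRep
  obtain ⟨y, hy, rfl⟩ := h₂.exists_isGapRep
  obtain ⟨Y, hY, hswap, hcard⟩ := hx.exists_hasSwapOrder hy
  have hm := hx.le_card_near_inter hy
  refine (hswap.flipDistLE_two_mul_sub hx hy
    ((disjoint_near_short x).mono_left (hY.trans inter_subset_left))
    ((disjoint_near_short y).mono_left (hY.trans inter_subset_right))).mono ?_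
  omega

/-- Between any pair of non-crossing spanning trees there is a flip sequence of length
at most `2n - √n + 1`. -/
theorem flip_dist_sqrt {n : ℕ} (T₁ T₂ : Finset (Edge n))
    (h₁ : NCST T₁) (h₂ : NCST T₂) :
    ∃ k : ℕ, FlipSeq T₁ T₂ k ∧ (k : ℝ) ≤ 2 * n - Real.sqrt n + 1 := by
  obtain ⟨k, hk, hseq⟩ := h₁.flipDistLE_seven_mul_div_four h₂
  refine ⟨k, hseq, ?_⟩
  have hk' : (4 * k : ℝ) ≤ 7 * n := by exact_mod_cast (by omega : 4 * k ≤ 7 * n)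
  have hsqrt : 4 * √(n : ℝ) ≤ n + 4 := by
    nlinarith [sq_nonneg (√(n : ℝ) - 2), Real.sq_sqrt (Nat.cast_nonneg (α := ℝ) n)]
  linarith
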